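/- arXiv:2012.08465 — 2 statements merged into one kernel-verified Lean document; each statement's English description precedes it below -/
import Mathlib

section
/- Let d ≥ 2, let S = {x ∈ ℝ^d : ‖x‖ = 1} be the unit sphere, and let σ denote the uniform (rotation-invariant) probability measure on S. Fix α > 0 and for a Borel probability measure μ on S define L_α(μ) = ∫_S log( ∫_S e^{α(⟨x,y⟩ − 1)} dμ(y) ) dμ(x). Then for every Borel probability measure μ on S one has L_α(μ) ≥ L_α(σ), and equality holds if and only if μ = σ; that is, the uniform probability measure is the unique minimizer of L_α over probability measures on S. -/
open scoped RealInnerProductSpace BigOperators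
open MeasureTheory

/-- The map induced on the unit sphere of `ℝ^d` by a linear isometry (rotation). -/
noncomputable def sphereRot {d : ℕ}
    (R : EuclideanSpace ℝ (Fin d) ≃ₗᵢ[ℝ] EuclideanSpace ℝ (Fin d))
    (x : Metric.sphere (0 : EuclideanSpace ℝ (Fin d)) 1) :
    Metric.sphere (0 : EuclideanSpace ℝ (Fin d)) 1 :=
  ⟨R x, by
    have hx : ‖(x : EuclideanSpace ℝ (Fin d))‖ = 1 := mem_sphere_zero_iff_norm.mp x.2
    simp [mem_sphere_zero_iff_norm, R.norm_map, hx]⟩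

section GaussianEnergy

open ProbabilityTheory

variable {ι : Type*} [Fintype ι]

instance isOpenPosMeasure_stdGaussian_euclideanSpace :
    (stdGaussian (EuclideanSpace ℝ ι)).IsOpenPosMeasure := by
  have : (gaussianReal 0 1).IsOpenPosMeasure :=
    (gaussianReal_absolutelyContinuous' 0 one_ne_zero).isOpenPosMeasure
  rw [← map_pi_eq_stdGaussian]
  exact (PiLp.continuous_toLp 2 (fun _ : ι => ℝ)).isOpenPosMeasure_map (WithLp.toLp_surjective 2)

/-- The interaction energy of two finite measures for the Gaussian kernel, expressed through
their characteristic functions. -/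
theorem integral_integral_gaussian_kernel (P Q : Measure (EuclideanSpace ℝ ι))
    [IsFiniteMeasure P] [IsFiniteMeasure Q] :
    ∫ x, ∫ y, Real.exp (-‖x - y‖ ^ 2 / 2) ∂Q ∂P =
      ∫ t, (charFun P t * (starRingEnd ℂ) (charFun Q t)).re
        ∂(stdGaussian (EuclideanSpace ℝ ι)) := by
  set γ := stdGaussian (EuclideanSpace ℝ ι)
  have h_integrable : Integrable (fun p : (EuclideanSpace ℝ ι × EuclideanSpace ℝ ι) ×
      EuclideanSpace ℝ ι => Complex.exp (⟪p.1.1 - p.1.2, p.2⟫ * Complex.I)) ((P.prod Q).prod γ) := by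
    refine Integrable.of_bound (C := 1)
      (Continuous.aestronglyMeasurable (by fun_prop)) (ae_of_all _ fun p => ?_)
    rw [Complex.norm_exp_ofReal_mul_I]
  have hkernel : ∀ x y : EuclideanSpace ℝ ι, ((Real.exp (-‖x - y‖ ^ 2 / 2) : ℝ) : ℂ) =
      ∫ t, Complex.exp (⟪x - y, t⟫ * Complex.I) ∂γ := by
    intro x y
    have hchar : ∫ t, Complex.exp (⟪x - y, t⟫ * Complex.I) ∂γ = charFun γ (x - y) := by
      rw [charFun_apply]
      congr with t
      rw [real_inner_comm]
    rw [hchar, charFun_stdGaussian]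
    push_cast
    rfl
  have hprod : ∀ t, ∫ p : EuclideanSpace ℝ ι × EuclideanSpace ℝ ι,
      Complex.exp (⟪p.1 - p.2, t⟫ * Complex.I) ∂(P.prod Q) =
        charFun P t * (starRingEnd ℂ) (charFun Q t) := by
    intro t
    rw [← charFun_neg, charFun_apply, charFun_apply, ← integral_prod_mul]
    congr with p
    rw [← Complex.exp_add, inner_sub_left, inner_neg_right]
    push_cast
    ring_nf
  have hgauss : Integrable (fun p : EuclideanSpace ℝ ι × EuclideanSpace ℝ ι =>
      Real.exp (-‖p.1 - p.2‖ ^ 2 / 2)) (P.prod Q) := by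
    refine Integrable.of_bound (C := 1)
      (Continuous.aestronglyMeasurable (by fun_prop)) (ae_of_all _ fun p => ?_)
    rw [Real.norm_eq_abs, Real.abs_exp, Real.exp_le_one_iff]
    have : 0 ≤ ‖p.1 - p.2‖ ^ 2 := by positivity
    linarith
  have hswap : ((∫ x, ∫ y, Real.exp (-‖x - y‖ ^ 2 / 2) ∂Q ∂P : ℝ) : ℂ) =
      ∫ t, charFun P t * (starRingEnd ℂ) (charFun Q t) ∂γ := by
    rw [← integral_prod _ hgauss, ← integral_complex_ofReal]
    simp_rw [hkernel]
    rw [integral_integral_swap h_integrable]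
    simp_rw [hprod]
  have hint_conj : Integrable (fun t => charFun P t * (starRingEnd ℂ) (charFun Q t)) γ := by
    simp_rw [← hprod]
    exact h_integrable.integral_prod_right
  have := congrArg Complex.re hswap
  rw [Complex.ofReal_re] at this
  rw [this]
  exact (integral_re hint_conj).symm

/-- The Gaussian energy distance is the squared `L²` distance of the characteristic functions. -/
theorem gaussian_energy_distance (P Q : Measure (EuclideanSpace ℝ ι))
    [IsFiniteMeasure P] [IsFiniteMeasure Q] :
    ∫ x, ∫ y, Real.exp (-‖x - y‖ ^ 2 / 2) ∂P ∂P + ∫ x, ∫ y, Real.exp (-‖x - y‖ ^ 2 / 2) ∂Q ∂Q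
      - 2 * ∫ x, ∫ y, Real.exp (-‖x - y‖ ^ 2 / 2) ∂Q ∂P =
      ∫ t, Complex.normSq (charFun P t - charFun Q t) ∂(stdGaussian (EuclideanSpace ℝ ι)) := by
  have h_integrable : ∀ (P Q : Measure (EuclideanSpace ℝ ι)) [IsFiniteMeasure P] [IsFiniteMeasure Q],
      Integrable (fun t => (charFun P t * (starRingEnd ℂ) (charFun Q t)).re)
        (stdGaussian (EuclideanSpace ℝ ι)) := by
    intro P Q _ _
    refine Integrable.of_bound (C := P.real Set.univ * Q.real Set.univ)
      (Continuous.aestronglyMeasurable ?_) (ae_of_all _ fun t => ?_)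
    · exact Complex.continuous_re.comp
        (continuous_charFun.mul (Complex.continuous_conj.comp continuous_charFun))
    · refine (Complex.abs_re_le_norm _).trans ?_
      rw [norm_mul, RCLike.norm_conj]
      exact mul_le_mul (norm_charFun_le t) (norm_charFun_le t) (norm_nonneg _)
        measureReal_nonneg
  simp_rw [integral_integral_gaussian_kernel]
  have hadd : Integrable (fun t => (charFun P t * (starRingEnd ℂ) (charFun P t)).re +
      (charFun Q t * (starRingEnd ℂ) (charFun Q t)).re) (stdGaussian (EuclideanSpace ℝ ι)) :=
    (h_integrable P P).add (h_integrable Q Q)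
  rw [← integral_const_mul, ← integral_add (h_integrable P P) (h_integrable Q Q),
    ← integral_sub hadd ((h_integrable P Q).const_mul 2)]
  congr with t
  simp [Complex.normSq_sub, Complex.mul_conj]

theorem gaussian_energy_distance_nonneg (P Q : Measure (EuclideanSpace ℝ ι))
    [IsFiniteMeasure P] [IsFiniteMeasure Q] :
    2 * ∫ x, ∫ y, Real.exp (-‖x - y‖ ^ 2 / 2) ∂Q ∂P ≤
      ∫ x, ∫ y, Real.exp (-‖x - y‖ ^ 2 / 2) ∂P ∂P +
        ∫ x, ∫ y, Real.exp (-‖x - y‖ ^ 2 / 2) ∂Q ∂Q := by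
  rw [← sub_nonneg, gaussian_energy_distance]
  exact integral_nonneg fun t => Complex.normSq_nonneg _

theorem eq_of_gaussian_energy_distance_eq_zero (P Q : Measure (EuclideanSpace ℝ ι))
    [IsFiniteMeasure P] [IsFiniteMeasure Q]
    (h : ∫ x, ∫ y, Real.exp (-‖x - y‖ ^ 2 / 2) ∂P ∂P +
      ∫ x, ∫ y, Real.exp (-‖x - y‖ ^ 2 / 2) ∂Q ∂Q =
        2 * ∫ x, ∫ y, Real.exp (-‖x - y‖ ^ 2 / 2) ∂Q ∂P) : P = Q := by
  rw [← sub_eq_zero, gaussian_energy_distance] at h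
  have hcont : Continuous fun t => Complex.normSq (charFun P t - charFun Q t) :=
    Complex.continuous_normSq.comp (continuous_charFun.sub continuous_charFun)
  have h_integrable : Integrable (fun t => Complex.normSq (charFun P t - charFun Q t))
      (stdGaussian (EuclideanSpace ℝ ι)) := by
    refine Integrable.of_bound (C := (P.real Set.univ + Q.real Set.univ) ^ 2)
      hcont.aestronglyMeasurable (ae_of_all _ fun t => ?_)
    rw [Real.norm_of_nonneg (Complex.normSq_nonneg _), Complex.normSq_eq_norm_sq]
    gcongr
    exact (norm_sub_le _ _).trans (add_le_add (norm_charFun_le t) (norm_charFun_le t))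
  have hae := (integral_eq_zero_iff_of_nonneg (fun t => Complex.normSq_nonneg _) h_integrable).1 h
  have heq := (Continuous.ae_eq_iff_eq _ hcont continuous_zero).1 hae
  refine Measure.ext_of_charFun (funext fun t => ?_)
  have := congrFun heq t
  simpa [sub_eq_zero] using this

end GaussianEnergy

section LogPotential

variable {X : Type*} [TopologicalSpace X] [CompactSpace X] [SecondCountableTopology X]
  [MeasurableSpace X] [BorelSpace X]

theorem integrable_of_continuous_of_compactSpace {Y : Type*} [TopologicalSpace Y] [CompactSpace Y]
    [MeasurableSpace Y] [OpensMeasurableSpace Y] {g : Y → ℝ} (hg : Continuous g) (ρ : Measure Y)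
    [IsFiniteMeasure ρ] : Integrable g ρ :=
  (BoundedContinuousFunction.mkOfCompact ⟨g, hg⟩).integrable ρ

theorem continuous_integral_kernel [T2Space X] {K : X → X → ℝ} (hK : Continuous (Function.uncurry K))
    (ρ : Measure X) [IsFiniteMeasure ρ] : Continuous fun x => ∫ y, K x y ∂ρ := by
  simpa using continuous_parametric_integral_of_continuous (μ := ρ) hK isCompact_univ

/-- The energy bound for the measure with density `1 / ∫ K x y ∂μ(y)`. -/
theorem integral_integral_kernel_div_potential_le {K : X → X → ℝ}
    (hK : Continuous (Function.uncurry K)) (hpos : ∀ x y, 0 < K x y)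
    (hsymm : ∀ x y, K x y = K y x) (μ : Measure X) [IsProbabilityMeasure μ]
    {f : X → ℝ} (hf : ∀ x, f x = ∫ y, K x y ∂μ) (hfc : Continuous f) (hfpos : ∀ x, 0 < f x) :
    ∫ x, (f x)⁻¹ * ∫ y, (f y)⁻¹ * K x y ∂μ ∂μ ≤ ∫ x, (f x)⁻¹ ∂μ := by
  have hic : Continuous fun x => (f x)⁻¹ := hfc.inv₀ fun x => (hfpos x).ne'
  have hKK : Continuous fun p : X × X => K p.1 p.2 := hK
  have hi1 : Continuous fun p : X × X => (f p.1)⁻¹ := hic.comp continuous_fst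
  have hi2 : Continuous fun p : X × X => (f p.2)⁻¹ := hic.comp continuous_snd
  have hint1 : Integrable (fun p : X × X => (f p.1)⁻¹ ^ 2 * K p.1 p.2) (μ.prod μ) :=
    integrable_of_continuous_of_compactSpace ((hi1.pow 2).mul hKK) _
  have hint2 : Integrable (fun p : X × X => (f p.2)⁻¹ ^ 2 * K p.1 p.2) (μ.prod μ) :=
    integrable_of_continuous_of_compactSpace ((hi2.pow 2).mul hKK) _
  have hint12 : Integrable (fun p : X × X => (f p.1)⁻¹ * ((f p.2)⁻¹ * K p.1 p.2)) (μ.prod μ) :=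
    integrable_of_continuous_of_compactSpace (hi1.mul (hi2.mul hKK)) _
  have hleft : ∫ p : X × X, (f p.1)⁻¹ ^ 2 * K p.1 p.2 ∂(μ.prod μ) = ∫ x, (f x)⁻¹ ∂μ := by
    rw [integral_prod _ hint1]
    congr with x
    simp only
    rw [integral_const_mul, ← hf]
    field_simp [(hfpos x).ne']
  have hright : ∫ p : X × X, (f p.2)⁻¹ ^ 2 * K p.1 p.2 ∂(μ.prod μ) = ∫ x, (f x)⁻¹ ∂μ := by
    rw [← hleft, ← integral_prod_swap]
    congr with p
    simp only [Prod.fst_swap, Prod.snd_swap]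
    rw [hsymm]
  have hmid : ∫ x, (f x)⁻¹ * ∫ y, (f y)⁻¹ * K x y ∂μ ∂μ =
      ∫ p : X × X, (f p.1)⁻¹ * ((f p.2)⁻¹ * K p.1 p.2) ∂(μ.prod μ) := by
    rw [integral_prod _ hint12]
    simp_rw [integral_const_mul]
  have hle : ∫ p : X × X, (f p.1)⁻¹ * ((f p.2)⁻¹ * K p.1 p.2) ∂(μ.prod μ) ≤
      ∫ p : X × X, (1 / 2) * ((f p.1)⁻¹ ^ 2 * K p.1 p.2 + (f p.2)⁻¹ ^ 2 * K p.1 p.2)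
        ∂(μ.prod μ) := by
    refine integral_mono hint12 ((hint1.add hint2).const_mul _) fun p => ?_
    have := mul_nonneg (hpos p.1 p.2).le (sq_nonneg ((f p.1)⁻¹ - (f p.2)⁻¹))
    simp only
    nlinarith
  rw [integral_const_mul, integral_add hint1 hint2, hleft, hright] at hle
  rw [hmid]
  linarith

/-- If `K` is positive definite and `σ` has constant potential `c`, then the integral of the
reciprocal of the potential of any probability measure is at most `1 / c`. -/
theorem mul_integral_inv_potential_le_one {K : X → X → ℝ}
    (hK : Continuous (Function.uncurry K)) (hpos : ∀ x y, 0 < K x y)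
    (hsymm : ∀ x y, K x y = K y x)
    (hpd : ∀ (ν τ : Measure X) [IsFiniteMeasure ν] [IsFiniteMeasure τ],
      2 * ∫ x, ∫ y, K x y ∂τ ∂ν ≤ ∫ x, ∫ y, K x y ∂ν ∂ν + ∫ x, ∫ y, K x y ∂τ ∂τ)
    (σ μ : Measure X) [IsProbabilityMeasure σ] [IsProbabilityMeasure μ] {c : ℝ}
    (hσ : ∀ x, ∫ y, K x y ∂σ = c)
    {f : X → ℝ} (hf : ∀ x, f x = ∫ y, K x y ∂μ) (hfc : Continuous f) (hfpos : ∀ x, 0 < f x) :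
    c * ∫ x, (f x)⁻¹ ∂μ ≤ 1 := by
  have hic : Continuous fun x => (f x)⁻¹ := hfc.inv₀ fun x => (hfpos x).ne'
  have h_integrable : Integrable (fun x => (f x)⁻¹) μ := integrable_of_continuous_of_compactSpace hic μ
  set m := ∫ x, (f x)⁻¹ ∂μ with hm
  have hm0 : 0 < m := by
    rw [hm, integral_pos_iff_support_of_nonneg (fun x => (inv_pos.2 (hfpos x)).le) h_integrable]
    have : Function.support (fun x => (f x)⁻¹) = Set.univ := by
      ext x
      simp [(hfpos x).ne']
    simp [this]
  set ν := μ.withDensity fun x => ENNReal.ofReal (f x)⁻¹ with hν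
  have hνfin : IsFiniteMeasure ν := isFiniteMeasure_withDensity_ofReal h_integrable.2
  have hνint : ∀ g : X → ℝ, ∫ x, g x ∂ν = ∫ x, (f x)⁻¹ * g x ∂μ := by
    intro g
    rw [hν, integral_withDensity_eq_integral_toReal_smul hic.measurable.ennreal_ofReal
      (ae_of_all _ fun x => ENNReal.ofReal_lt_top)]
    congr with x
    rw [ENNReal.toReal_ofReal (inv_pos.2 (hfpos x)).le, smul_eq_mul]
  have hσfin : IsFiniteMeasure (ENNReal.ofReal m • σ) := σ.smul_finite ENNReal.ofReal_ne_top
  have h := hpd ν (ENNReal.ofReal m • σ)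
  simp_rw [integral_smul_measure, ENNReal.toReal_ofReal hm0.le, hσ, hνint, integral_mul_const,
    smul_eq_mul, integral_const, probReal_univ] at h
  rw [← hm] at h
  have hle := integral_integral_kernel_div_potential_le hK hpos hsymm μ hf hfc hfpos
  rw [← hm] at hle
  have : m * (c * m) ≤ m * 1 := by
    simp only [one_smul] at h
    nlinarith
  exact le_of_mul_le_mul_left this hm0

theorem log_sub_log_add_div_nonneg {a c : ℝ} (ha : 0 < a) (hc : 0 < c) :
    0 ≤ Real.log a - Real.log c - 1 + c * a⁻¹ := by
  have := Real.log_le_sub_one_of_pos (div_pos hc ha)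
  rw [Real.log_div hc.ne' ha.ne', div_eq_mul_inv] at this
  linarith

theorem eq_of_log_sub_log_add_div_eq_zero {a c : ℝ} (ha : 0 < a) (hc : 0 < c)
    (h : Real.log a - Real.log c - 1 + c * a⁻¹ = 0) : a = c := by
  by_contra hne
  have hne' : c / a ≠ 1 := fun h1 => hne ((div_eq_one_iff_eq ha.ne').1 h1).symm
  have := Real.log_lt_sub_one_of_pos (div_pos hc ha) hne'
  rw [Real.log_div hc.ne' ha.ne', div_eq_mul_inv] at this
  linarith

/-- For a strictly positive definite positive kernel, a probability measure with constant potential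
is the unique minimizer of the integrated logarithm of the potential. -/
theorem integral_log_potential_unique_minimizer [T2Space X] {K : X → X → ℝ}
    (hK : Continuous (Function.uncurry K)) (hpos : ∀ x y, 0 < K x y)
    (hsymm : ∀ x y, K x y = K y x)
    (hpd : ∀ (ν τ : Measure X) [IsFiniteMeasure ν] [IsFiniteMeasure τ],
      2 * ∫ x, ∫ y, K x y ∂τ ∂ν ≤ ∫ x, ∫ y, K x y ∂ν ∂ν + ∫ x, ∫ y, K x y ∂τ ∂τ)
    (hspd : ∀ (ν τ : Measure X) [IsFiniteMeasure ν] [IsFiniteMeasure τ],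
      ∫ x, ∫ y, K x y ∂ν ∂ν + ∫ x, ∫ y, K x y ∂τ ∂τ = 2 * ∫ x, ∫ y, K x y ∂τ ∂ν → ν = τ)
    (σ μ : Measure X) [IsProbabilityMeasure σ] [IsProbabilityMeasure μ]
    (hσ : ∀ x x', ∫ y, K x y ∂σ = ∫ y, K x' y ∂σ) :
    (∫ x, Real.log (∫ y, K x y ∂σ) ∂σ) ≤ (∫ x, Real.log (∫ y, K x y ∂μ) ∂μ) ∧
    ((∫ x, Real.log (∫ y, K x y ∂μ) ∂μ) = (∫ x, Real.log (∫ y, K x y ∂σ) ∂σ) ↔ μ = σ) := by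
  have hpot : ∀ (ρ : Measure X) [IsProbabilityMeasure ρ] (x : X), 0 < ∫ y, K x y ∂ρ := by
    intro ρ _ x
    have hKx : Continuous (K x) := hK.comp (Continuous.prodMk_right x)
    rw [integral_pos_iff_support_of_nonneg (fun y => (hpos x y).le)
      (integrable_of_continuous_of_compactSpace hKx ρ)]
    have : Function.support (K x) = Set.univ := by
      ext y
      simp [(hpos x y).ne']
    simp [this]
  obtain ⟨x₀⟩ : Nonempty X := nonempty_of_isProbabilityMeasure σ
  set c := ∫ y, K x₀ y ∂σ with hc
  have hσc : ∀ x, ∫ y, K x y ∂σ = c := fun x => hσ x x₀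
  have hc0 : 0 < c := hpot σ x₀
  set f : X → ℝ := fun x => ∫ y, K x y ∂μ with hf
  have hfc : Continuous f := continuous_integral_kernel hK μ
  have hfpos : ∀ x, 0 < f x := hpot μ
  have hic : Continuous fun x => (f x)⁻¹ := hfc.inv₀ fun x => (hfpos x).ne'
  have hlog : Continuous fun x => Real.log (f x) := hfc.log fun x => (hfpos x).ne'
  have hm := mul_integral_inv_potential_le_one hK hpos hsymm hpd σ μ hσc
    (fun x => rfl) hfc hfpos
  have hLσ : ∫ x, Real.log (∫ y, K x y ∂σ) ∂σ = Real.log c := by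
    simp [hσc]
  have hgap : ∫ x, (Real.log (f x) - Real.log c - 1 + c * (f x)⁻¹) ∂μ =
      ∫ x, Real.log (f x) ∂μ - Real.log c - 1 + c * ∫ x, (f x)⁻¹ ∂μ := by
    have h1 := integrable_of_continuous_of_compactSpace hlog μ
    have h2 := integrable_of_continuous_of_compactSpace hic μ
    have h3 : Integrable (fun x => Real.log (f x) - Real.log c) μ := h1.sub (integrable_const _)
    have h4 : Integrable (fun x => Real.log (f x) - Real.log c - 1) μ :=
      h3.sub (integrable_const _)
    rw [integral_add h4 (h2.const_mul c), integral_sub h3 (integrable_const _), 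
      integral_sub h1 (integrable_const _), integral_const_mul]
    simp
  have hnn : ∀ x, 0 ≤ Real.log (f x) - Real.log c - 1 + c * (f x)⁻¹ :=
    fun x => log_sub_log_add_div_nonneg (hfpos x) hc0
  have hgap0 : 0 ≤ ∫ x, (Real.log (f x) - Real.log c - 1 + c * (f x)⁻¹) ∂μ :=
    integral_nonneg hnn
  rw [hLσ]
  refine ⟨by linarith, fun heq => ?_, fun h => ?_⟩
  · have hz : ∫ x, (Real.log (f x) - Real.log c - 1 + c * (f x)⁻¹) ∂μ = 0 := by linarith
    have hae := (integral_eq_zero_iff_of_nonneg hnn (integrable_of_continuous_of_compactSpace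
      (((hlog.sub continuous_const).sub continuous_const).add (continuous_const.mul hic)) μ)).1 hz
    have hfae : f =ᵐ[μ] fun _ => c := by
      filter_upwards [hae] with x hx
      exact eq_of_log_sub_log_add_div_eq_zero (hfpos x) hc0 hx
    apply hspd
    have hμμ : ∫ x, ∫ y, K x y ∂μ ∂μ = c := by
      rw [integral_congr_ae hfae]
      simp
    rw [hμμ]
    simp only [hσc, integral_const, probReal_univ, one_smul]
    ring
  · subst h
    exact hLσ

end LogPotential

section SphereKernel

variable {d : ℕ}

theorem exp_mul_inner_sub_one_eq {α : ℝ} (hα : 0 ≤ α)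
    (x y : Metric.sphere (0 : EuclideanSpace ℝ (Fin d)) 1) :
    Real.exp (α * (⟪(x : EuclideanSpace ℝ (Fin d)), (y : EuclideanSpace ℝ (Fin d))⟫ - 1)) =
      Real.exp (-‖√α • (x : EuclideanSpace ℝ (Fin d)) - √α • (y : EuclideanSpace ℝ (Fin d))‖ ^ 2
        / 2) := by
  have hx : ‖(x : EuclideanSpace ℝ (Fin d))‖ = 1 := mem_sphere_zero_iff_norm.mp x.2
  have hy : ‖(y : EuclideanSpace ℝ (Fin d))‖ = 1 := mem_sphere_zero_iff_norm.mp y.2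
  rw [← smul_sub, norm_smul, mul_pow, norm_sub_sq_real, hx, hy, Real.norm_eq_abs, sq_abs,
    Real.sq_sqrt hα]
  ring_nf

/-- The embedding of the unit sphere as the sphere of radius `√α`. -/
noncomputable def sphereDilation (α : ℝ) (z : Metric.sphere (0 : EuclideanSpace ℝ (Fin d)) 1) :
    EuclideanSpace ℝ (Fin d) :=
  √α • (z : EuclideanSpace ℝ (Fin d))

theorem continuous_sphereDilation (α : ℝ) : Continuous (sphereDilation (d := d) α) := by
  unfold sphereDilation
  fun_prop

/-- Energies on the sphere are Gaussian energies of the dilated image measures. -/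
theorem integral_integral_sphere_kernel {α : ℝ} (hα : 0 ≤ α)
    (ν τ : Measure (Metric.sphere (0 : EuclideanSpace ℝ (Fin d)) 1))
    [IsFiniteMeasure ν] [IsFiniteMeasure τ] :
    ∫ x, ∫ y, Real.exp (α * (⟪(x : EuclideanSpace ℝ (Fin d)),
        (y : EuclideanSpace ℝ (Fin d))⟫ - 1)) ∂τ ∂ν =
      ∫ x, ∫ y, Real.exp (-‖x - y‖ ^ 2 / 2) ∂(τ.map (sphereDilation α))
        ∂(ν.map (sphereDilation α)) := by
  have hcont : Continuous (sphereDilation (d := d) α) := continuous_sphereDilation α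
  have hinner : ∀ x : EuclideanSpace ℝ (Fin d),
      ∫ y, Real.exp (-‖x - y‖ ^ 2 / 2) ∂(τ.map (sphereDilation α)) =
        ∫ z, Real.exp (-‖x - sphereDilation α z‖ ^ 2 / 2) ∂τ := fun x =>
    integral_map hcont.measurable.aemeasurable
      (Continuous.aestronglyMeasurable (by fun_prop))
  simp_rw [hinner, exp_mul_inner_sub_one_eq hα]
  rw [integral_map hcont.measurable.aemeasurable]
  · rfl
  refine StronglyMeasurable.aestronglyMeasurable ?_
  refine StronglyMeasurable.integral_prod_right' (f := fun p : EuclideanSpace ℝ (Fin d) ×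
    Metric.sphere (0 : EuclideanSpace ℝ (Fin d)) 1 =>
      Real.exp (-‖p.1 - sphereDilation α p.2‖ ^ 2 / 2)) ?_
  exact Continuous.stronglyMeasurable (by fun_prop)

theorem map_sphereDilation_injective {α : ℝ} (hα : 0 < α) :
    Function.Injective (Measure.map (sphereDilation (d := d) α)) := by
  have hemb : MeasurableEmbedding (sphereDilation (d := d) α) :=
    (measurableEmbedding_const_smul₀ (Real.sqrt_pos.2 hα).ne').comp
      (MeasurableEmbedding.subtype_coe Metric.isClosed_sphere.measurableSet)
  intro ν τ h
  rw [← hemb.comap_map ν, ← hemb.comap_map τ, h]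

/-- The potential of a rotation-invariant measure is constant on the sphere. -/
theorem sphere_potential_const (α : ℝ)
    (σ : Measure (Metric.sphere (0 : EuclideanSpace ℝ (Fin d)) 1))
    (hσinv : ∀ R : EuclideanSpace ℝ (Fin d) ≃ₗᵢ[ℝ] EuclideanSpace ℝ (Fin d),
      Measure.map (sphereRot R) σ = σ)
    (x x' : Metric.sphere (0 : EuclideanSpace ℝ (Fin d)) 1) :
    ∫ y, Real.exp (α * (⟪(x : EuclideanSpace ℝ (Fin d)), (y : EuclideanSpace ℝ (Fin d))⟫ - 1)) ∂σ =
      ∫ y, Real.exp (α * (⟪(x' : EuclideanSpace ℝ (Fin d)),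
        (y : EuclideanSpace ℝ (Fin d))⟫ - 1)) ∂σ := by
  have hx : ‖(x : EuclideanSpace ℝ (Fin d))‖ = 1 := mem_sphere_zero_iff_norm.mp x.2
  have hx' : ‖(x' : EuclideanSpace ℝ (Fin d))‖ = 1 := mem_sphere_zero_iff_norm.mp x'.2
  set R := (ℝ ∙ ((x : EuclideanSpace ℝ (Fin d)) - x'))ᗮ.reflection with hR
  have hRx : R x = x' := Submodule.reflection_sub (hx.trans hx'.symm)
  have hcont : Continuous (sphereRot R) :=
    (R.continuous.comp continuous_subtype_val).subtype_mk _
  conv_rhs => rw [← hσinv R]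
  rw [integral_map hcont.measurable.aemeasurable (Continuous.aestronglyMeasurable (by fun_prop))]
  congr with y
  rw [← hRx]
  simp only [sphereRot, R.inner_map_map]

end SphereKernel

/-- Let `σ` be the uniform (rotation-invariant) probability measure on the
unit sphere `S ⊂ ℝ^d`, `d ≥ 2`, and `α > 0`. For a Borel probability measure `μ` on `S` set
`L_α(μ) = ∫ log (∫ exp (α (⟪x,y⟫ - 1)) dμ(y)) dμ(x)`. Then `L_α(μ) ≥ L_α(σ)` with equality
iff `μ = σ`: the uniform measure is the unique minimizer. -/
theorem uniform_measure_unique_minimizer (d : ℕ) (hd : 2 ≤ d) (α : ℝ) (hα : 0 < α)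
    (σ : Measure (Metric.sphere (0 : EuclideanSpace ℝ (Fin d)) 1))
    (hσprob : IsProbabilityMeasure σ)
    (hσinv : ∀ R : EuclideanSpace ℝ (Fin d) ≃ₗᵢ[ℝ] EuclideanSpace ℝ (Fin d),
      Measure.map (sphereRot R) σ = σ)
    (μ : Measure (Metric.sphere (0 : EuclideanSpace ℝ (Fin d)) 1))
    (hμprob : IsProbabilityMeasure μ) :
    (∫ x, Real.log (∫ y, Real.exp (α * (⟪(x : EuclideanSpace ℝ (Fin d)),
        (y : EuclideanSpace ℝ (Fin d))⟫ - 1)) ∂σ) ∂σ) ≤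
      (∫ x, Real.log (∫ y, Real.exp (α * (⟪(x : EuclideanSpace ℝ (Fin d)),
        (y : EuclideanSpace ℝ (Fin d))⟫ - 1)) ∂μ) ∂μ) ∧
    ((∫ x, Real.log (∫ y, Real.exp (α * (⟪(x : EuclideanSpace ℝ (Fin d)),
        (y : EuclideanSpace ℝ (Fin d))⟫ - 1)) ∂μ) ∂μ) =
      (∫ x, Real.log (∫ y, Real.exp (α * (⟪(x : EuclideanSpace ℝ (Fin d)),
        (y : EuclideanSpace ℝ (Fin d))⟫ - 1)) ∂σ) ∂σ) ↔ μ = σ) := by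
  refine integral_log_potential_unique_minimizer
    (K := fun x y : Metric.sphere (0 : EuclideanSpace ℝ (Fin d)) 1 =>
      Real.exp (α * (⟪(x : EuclideanSpace ℝ (Fin d)),
      (y : EuclideanSpace ℝ (Fin d))⟫ - 1))) ?_ (fun x y => Real.exp_pos _)
    (fun x y => by rw [real_inner_comm]) (fun ν τ _ _ => ?_) (fun ν τ _ _ h => ?_) σ μ
    (sphere_potential_const α σ hσinv)
  · unfold Function.uncurry
    fun_prop
  · simp_rw [integral_integral_sphere_kernel hα.le]
    exact gaussian_energy_distance_nonneg _ _
  · simp_rw [integral_integral_sphere_kernel hα.le] at h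
    exact map_sphereDilation_injective hα (eq_of_gaussian_energy_distance_eq_zero _ _ h)
end

section
/- Let d ≥ 2, let S = {x ∈ ℝ^d : ‖x‖ = 1} be the unit sphere with uniform probability measure σ, and fix α > 0. For each integer n ≥ 1, let (u₁⁽ⁿ⁾, …, uₙ⁽ⁿ⁾) ∈ Sⁿ be a global minimizer of L_α(u) = Σ_{i=1}^n log( 1 + Σ_{j≠i} e^{α(⟨u_j, u_i⟩ − 1)} ) over all n-tuples of points of S, and let μ_n = (1/n) Σ_{i=1}^n δ_{u_i⁽ⁿ⁾} be the associated empirical probability measure. Then μ_n converges weakly to σ as n → ∞. -/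
open scoped RealInnerProductSpace BigOperators ENNReal Topology
open MeasureTheory Filter

/-- First-order optimality of a minimizer of the logarithmic energy: moving one point of the
configuration to `x` cannot decrease the first variation by more than `2 / (n δ)`. -/
lemma first_variation_le_of_minimizer {X : Type*} {k : X → X → ℝ} {δ : ℝ} (hδ : 0 < δ)
    (hdiag : ∀ x, k x x = 1) (hlow : ∀ x y, δ ≤ k x y) {n : ℕ} {u : Fin n → X}
    (hmin : ∀ w : Fin n → X,
      (∑ i, Real.log (1 + ∑ j ∈ Finset.univ.erase i, k (u j) (u i))) ≤
        ∑ i, Real.log (1 + ∑ j ∈ Finset.univ.erase i, k (w j) (w i)))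
    (x : X) (j : Fin n) :
    Real.log (∑ l, k (u l) (u j)) + ∑ i, k (u j) (u i) / ∑ l, k (u l) (u i) ≤
      Real.log (∑ l, k (u l) x) + ∑ i, k x (u i) / ∑ l, k (u l) (u i) + 2 / (n * δ) := by
  have hn : (0 : ℝ) < n := by exact_mod_cast j.pos
  have hfull : ∀ (w : Fin n → X) i,
      1 + ∑ l ∈ Finset.univ.erase i, k (w l) (w i) = ∑ l, k (w l) (w i) := by
    intro w i
    rw [← Finset.add_sum_erase _ _ (Finset.mem_univ i), hdiag]
  have hHlow : ∀ y, n * δ ≤ ∑ l, k (u l) y := by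
    intro y
    calc n * δ = ∑ _l : Fin n, δ := by simp
      _ ≤ _ := Finset.sum_le_sum fun l _ => hlow _ _
  have hnδ : 0 < n * δ := mul_pos hn hδ
  have hHpos : ∀ y, 0 < ∑ l, k (u l) y := fun y => hnδ.trans_le (hHlow y)
  have hinv : ∀ y, 1 / (∑ l, k (u l) y) ≤ 1 / (n * δ) := fun y =>
    one_div_le_one_div_of_le hnδ (hHlow y)
  have hcmp := hmin (Function.update u j x)
  simp only [hfull] at hcmp
  have hpos : ∀ y z, 0 < k y z := fun y z => hδ.trans_le (hlow y z)
  have hsum : ∀ y, ∑ l, k (Function.update u j x l) y = (∑ l, k (u l) y) + k x y - k (u j) y := by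
    intro y
    rw [← Finset.add_sum_erase _ _ (Finset.mem_univ j),
      ← Finset.add_sum_erase (a := j) _ (fun l => k (u l) y) (Finset.mem_univ j)]
    have : ∑ l ∈ Finset.univ.erase j, k (Function.update u j x l) y =
        ∑ l ∈ Finset.univ.erase j, k (u l) y :=
      Finset.sum_congr rfl fun l hl => by
        rw [Function.update_of_ne (Finset.ne_of_mem_erase hl)]
    rw [this, Function.update_self]
    ring
  have hlog : ∀ a b : ℝ, 0 < a → 0 < b → Real.log b ≤ Real.log a + (b - a) / a := by
    intro a b ha hb
    have := Real.log_le_sub_one_of_pos (div_pos hb ha)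
    rw [Real.log_div hb.ne' ha.ne'] at this
    have h2 : (b - a) / a = b / a - 1 := by field_simp
    linarith
  have hnewpos : ∀ y, 0 < (∑ l, k (u l) y) + k x y - k (u j) y := by
    intro y
    rw [← hsum]
    exact Finset.sum_pos (fun l _ => hpos _ _) ⟨j, Finset.mem_univ j⟩
  rw [← Finset.add_sum_erase _ _ (Finset.mem_univ j),
    ← Finset.add_sum_erase (a := j) Finset.univ
      (fun i => Real.log (∑ l, k (Function.update u j x l) (Function.update u j x i)))
      (Finset.mem_univ j)] at hcmp
  have hothers : ∑ i ∈ Finset.univ.erase j,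
      Real.log (∑ l, k (Function.update u j x l) (Function.update u j x i)) ≤
      ∑ i ∈ Finset.univ.erase j, (Real.log (∑ l, k (u l) (u i)) +
        (k x (u i) - k (u j) (u i)) / ∑ l, k (u l) (u i)) := by
    refine Finset.sum_le_sum fun i hi => ?_
    rw [Function.update_of_ne (Finset.ne_of_mem_erase hi), hsum]
    have := hlog _ _ (hHpos (u i)) (hnewpos (u i))
    rwa [show (∑ l, k (u l) (u i)) + k x (u i) - k (u j) (u i) - ∑ l, k (u l) (u i) =
      k x (u i) - k (u j) (u i) by ring] at this
  have hself : Real.log (∑ l, k (Function.update u j x l) (Function.update u j x j)) ≤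
      Real.log (∑ l, k (u l) x) + 1 / (n * δ) := by
    rw [Function.update_self, hsum, hdiag]
    have h1 := hnewpos x
    rw [hdiag] at h1
    have h2 := hlog _ _ (hHpos x) h1
    have h3 : ((∑ l, k (u l) x) + 1 - k (u j) x - ∑ l, k (u l) x) / (∑ l, k (u l) x) ≤
        1 / ∑ l, k (u l) x := by
      have := hpos (u j) x
      have := hHpos x
      gcongr
      linarith
    linarith [hinv x]
  rw [Finset.sum_add_distrib] at hothers
  have hsplit : ∑ i, (k x (u i) - k (u j) (u i)) / ∑ l, k (u l) (u i) =
      (k x (u j) - k (u j) (u j)) / (∑ l, k (u l) (u j)) +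
      ∑ i ∈ Finset.univ.erase j, (k x (u i) - k (u j) (u i)) / ∑ l, k (u l) (u i) :=
    (Finset.add_sum_erase _ _ (Finset.mem_univ j)).symm
  have hdrop : -(1 / (n * δ)) ≤ (k x (u j) - k (u j) (u j)) / (∑ l, k (u l) (u j)) := by
    rw [hdiag, sub_div]
    linarith [hinv (u j), div_pos (hpos x (u j)) (hHpos (u j))]
  simp only [sub_div, Finset.sum_sub_distrib] at hsplit hothers hdrop
  have h2 : 2 / (n * δ) = 1 / (n * δ) + 1 / (n * δ) := by ring
  linarith

/-- A minimizer of the logarithmic energy almost minimizes the quadratic energy. -/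
lemma quadratic_energy_le_of_minimizer {X : Type*} [MeasurableSpace X] {σ : Measure X}
    [IsProbabilityMeasure σ] {k : X → X → ℝ} {δ c : ℝ} (hδ : 0 < δ) (hc : 0 < c)
    (hsymm : ∀ x y, k x y = k y x) (hdiag : ∀ x, k x x = 1)
    (hlow : ∀ x y, δ ≤ k x y) (hup : ∀ x y, k x y ≤ 1)
    (hint : ∀ y, Integrable (k y) σ) (hpot : ∀ y, ∫ x, k y x ∂σ = c)
    {n : ℕ} (hn : 0 < n) {u : Fin n → X}
    (hmin : ∀ w : Fin n → X,
      (∑ i, Real.log (1 + ∑ j ∈ Finset.univ.erase i, k (u j) (u i))) ≤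
        ∑ i, Real.log (1 + ∑ j ∈ Finset.univ.erase i, k (w j) (w i))) :
    ∑ j, ∑ l, k (u l) (u j) ≤ n ^ 2 * c + 3 / δ * n := by
  have hn' : (0 : ℝ) < n := by exact_mod_cast hn
  have hpos : ∀ y z, 0 < k y z := fun y z => hδ.trans_le (hlow y z)
  have : Nonempty (Fin n) := ⟨⟨0, hn⟩⟩
  have hHpos : ∀ y, 0 < ∑ l, k (u l) y := fun y =>
    Finset.sum_pos (fun l _ => hpos _ _) Finset.univ_nonempty
  have hHle : ∀ y, ∑ l, k (u l) y ≤ n := fun y => by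
    calc ∑ l, k (u l) y ≤ ∑ _l : Fin n, (1 : ℝ) := Finset.sum_le_sum fun l _ => hup _ _
      _ = n := by simp
  have hvar : ∀ x, (∑ j, Real.log (∑ l, k (u l) (u j))) + n ≤
      n * (Real.log (∑ l, k (u l) x) + ∑ i, k x (u i) / ∑ l, k (u l) (u i)) + 2 / δ := by
    intro x
    have h := Finset.sum_le_sum fun (j : Fin n) (_ : j ∈ Finset.univ) =>
      first_variation_le_of_minimizer hδ hdiag hlow hmin x j
    rw [Finset.sum_add_distrib, Finset.sum_comm (f := fun j i => k (u j) (u i) / _)] at h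
    simp only [← Finset.sum_div, div_self (hHpos _).ne', Finset.sum_const, Finset.card_univ,
      Fintype.card_fin, nsmul_eq_mul, mul_one] at h
    have h2 : (n : ℝ) * (2 / (n * δ)) = 2 / δ := by field_simp
    linarith
  obtain ⟨a, ha⟩ := Finite.exists_min fun j => ∑ l, k (u l) (u j)
  set M := ∑ l, k (u l) (u a) with hM
  have hMpos : 0 < M := hHpos _
  have hlogM : n * Real.log M ≤ ∑ j, Real.log (∑ l, k (u l) (u j)) := by
    calc n * Real.log M = ∑ _j : Fin n, Real.log M := by simp
      _ ≤ _ := Finset.sum_le_sum fun j _ => Real.log_le_log hMpos (ha j)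
  have hspread : ∑ j, ∑ l, k (u l) (u j) ≤ n * M + 2 / δ * n := by
    have h1 : ∑ i, k (u a) (u i) / ∑ l, k (u l) (u i) ≤ 1 := by
      calc ∑ i, k (u a) (u i) / ∑ l, k (u l) (u i) ≤ ∑ i, k (u a) (u i) / M :=
            Finset.sum_le_sum fun i _ => div_le_div_of_nonneg_left (hpos _ _).le hMpos (ha i)
        _ = 1 := by
            rw [← Finset.sum_div, hM, Finset.sum_congr rfl fun i _ => hsymm (u a) (u i)]
            exact div_self hMpos.ne'
    have h2 := hvar (u a)
    have h3 : ∀ j, (∑ l, k (u l) (u j)) - M ≤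
        n * (Real.log (∑ l, k (u l) (u j)) - Real.log M) := by
      intro j
      have hH := hHpos (u j)
      have h4 := Real.log_le_sub_one_of_pos (div_pos hMpos hH)
      rw [Real.log_div hMpos.ne' hH.ne'] at h4
      have h5 : (∑ l, k (u l) (u j)) - M = (∑ l, k (u l) (u j)) *
          (1 - M / ∑ l, k (u l) (u j)) := by field_simp
      rw [h5]
      have h6 : 0 ≤ 1 - M / ∑ l, k (u l) (u j) := by
        rw [sub_nonneg, div_le_one hH]; exact ha j
      exact mul_le_mul (hHle _) (by linarith) h6 hn'.le
    have h4 := Finset.sum_le_sum fun (j : Fin n) (_ : j ∈ Finset.univ) => h3 j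
    rw [← Finset.mul_sum, Finset.sum_sub_distrib, Finset.sum_sub_distrib] at h4
    simp only [Finset.sum_const, Finset.card_univ, Fintype.card_fin, nsmul_eq_mul] at h4
    have h5 : (∑ j, Real.log (∑ l, k (u l) (u j))) - n * Real.log M ≤ 2 / δ := by
      nlinarith
    nlinarith
  have hMle : 2 * M ≤ 2 * (n * c) + 2 / δ := by
    have hnc : 0 < n * c := mul_pos hn' hc
    have h1 : ∀ x, n * Real.log M + n ≤ (n * (Real.log (n * c) - 1) + 2 / δ) +
        ∑ i, (1 / c + n / ∑ l, k (u l) (u i)) * k (u i) x := by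
      intro x
      have h2 := hvar x
      have h3 := Real.log_le_sub_one_of_pos (div_pos (hHpos x) hnc)
      rw [Real.log_div (hHpos x).ne' hnc.ne'] at h3
      have h4 : n * ((∑ l, k (u l) x) / (n * c)) = ∑ i, 1 / c * k (u i) x := by
        rw [← Finset.mul_sum]; field_simp
      have h5 : n * ∑ i, k x (u i) / ∑ l, k (u l) (u i) =
          ∑ i, n / (∑ l, k (u l) (u i)) * k (u i) x := by
        rw [Finset.mul_sum]
        refine Finset.sum_congr rfl fun i _ => ?_
        rw [hsymm x]; ring
      simp only [add_mul, Finset.sum_add_distrib]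
      rw [← h4, ← h5]
      nlinarith
    have hi : Integrable (fun x => ∑ i, (1 / c + n / ∑ l, k (u l) (u i)) * k (u i) x) σ :=
      integrable_finsetSum _ fun i _ => (hint _).const_mul _
    have h2 := integral_mono (integrable_const _) ((integrable_const _).add hi) h1
    have h7 : ∑ i, (1 / c + n / ∑ l, k (u l) (u i)) * c ≤ n * (1 + n * c / M) := by
      calc _ ≤ ∑ _i : Fin n, (1 + n * c / M) := by
            refine Finset.sum_le_sum fun i _ => ?_
            rw [add_mul, one_div, inv_mul_cancel₀ hc.ne', div_mul_eq_mul_div]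
            gcongr
            exact ha i
        _ = _ := by simp [mul_add]
    simp only [Pi.add_apply] at h2
    rw [integral_add (integrable_const _) hi,
      integral_finsetSum _ fun i _ => (hint _).const_mul _] at h2
    simp only [integral_const_mul, hpot, integral_const, probReal_univ, one_smul] at h2
    have h3 := Real.log_le_sub_one_of_pos (div_pos hnc hMpos)
    rw [Real.log_div hnc.ne' hMpos.ne'] at h3
    have h4 : n * (2 - 2 * (n * c / M)) ≤ 2 / δ := by nlinarith
    have h5 : M * (n * (2 - 2 * (n * c / M))) ≤ n * (2 / δ) := by
      have : 0 < 2 / δ := by positivity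
      calc _ ≤ M * (2 / δ) := by gcongr
        _ ≤ _ := by gcongr; exact hHle _
    have h6 : M * (n * (2 - 2 * (n * c / M))) = n * (2 * M - 2 * (n * c)) := by
      field_simp
    rw [h6] at h5
    linarith [le_of_mul_le_mul_left h5 hn']
  have h3 : 3 / δ = 2 / δ + 1 / δ := by ring
  have h4 : 2 / δ = 1 / δ + 1 / δ := by ring
  nlinarith

/-- The squared distance between the mean of a feature map over a finite configuration and its
integral, when the integral has constant inner product with the features. -/
lemma norm_sq_mean_sub_integral {X H : Type*} [MeasurableSpace X] {σ : Measure X}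
    [IsProbabilityMeasure σ] [NormedAddCommGroup H] [InnerProductSpace ℝ H] [CompleteSpace H]
    {φ : X → H} (hφ : Integrable φ σ) {c : ℝ} (hc : ∀ x, ∫ y, ⟪φ x, φ y⟫ ∂σ = c)
    {n : ℕ} (hn : n ≠ 0) (u : Fin n → X) :
    ‖(n : ℝ)⁻¹ • ∑ i, φ (u i) - ∫ y, φ y ∂σ‖ ^ 2 =
      ((n : ℝ) ^ 2)⁻¹ * (∑ j, ∑ i, ⟪φ (u i), φ (u j)⟫) - c := by
  have hn' : (n : ℝ) ≠ 0 := by exact_mod_cast hn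
  have h1 : ∀ x, ⟪φ x, ∫ y, φ y ∂σ⟫ = c := fun x => by rw [← integral_inner hφ, hc]
  have h2 : ⟪∫ y, φ y ∂σ, ∫ y, φ y ∂σ⟫ = c := by
    rw [← integral_inner hφ]
    simp_rw [real_inner_comm, h1]
    simp
  rw [norm_sub_sq_real, ← real_inner_self_eq_norm_sq, ← real_inner_self_eq_norm_sq, h2]
  simp only [inner_smul_left, inner_smul_right, sum_inner, inner_sum, h1, conj_trivial]
  simp only [Finset.sum_const, Finset.card_univ, Fintype.card_fin, nsmul_eq_mul]
  rw [inv_mul_cancel_left₀ hn', ← Finset.mul_sum]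
  ring

/-- The vector of all monomials of degree `p` in the coordinates of a vector. -/
noncomputable def tensorPower {d : ℕ} (p : ℕ) (x : EuclideanSpace ℝ (Fin d)) :
    EuclideanSpace ℝ (Fin p → Fin d) :=
  WithLp.toLp 2 fun a => ∏ q, x (a q)

lemma inner_tensorPower {d : ℕ} (p : ℕ) (x y : EuclideanSpace ℝ (Fin d)) :
    ⟪tensorPower p x, tensorPower p y⟫ = ⟪x, y⟫ ^ p := by
  simp only [tensorPower, PiLp.inner_apply, Fintype.sum_pow]
  simp [Finset.prod_mul_distrib]

lemma continuous_tensorPower {d : ℕ} (p : ℕ) :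
    Continuous (tensorPower p : EuclideanSpace ℝ (Fin d) → _) := by
  unfold tensorPower
  fun_prop

/-- Zonal integrals against a rotation-invariant measure do not depend on the pole. -/
lemma integral_zonal_eq {d : ℕ} {σ : Measure (Metric.sphere (0 : EuclideanSpace ℝ (Fin d)) 1)}
    (hσinv : ∀ R : EuclideanSpace ℝ (Fin d) ≃ₗᵢ[ℝ] EuclideanSpace ℝ (Fin d),
      Measure.map (sphereRot R) σ = σ) {g : ℝ → ℝ} (hg : Continuous g)
    (x y : Metric.sphere (0 : EuclideanSpace ℝ (Fin d)) 1) :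
    ∫ z, g ⟪(x : EuclideanSpace ℝ (Fin d)), z⟫ ∂σ =
      ∫ z, g ⟪(y : EuclideanSpace ℝ (Fin d)), z⟫ ∂σ := by
  set R := (ℝ ∙ ((x : EuclideanSpace ℝ (Fin d)) - y))ᗮ.reflection
  have hR : R x = y := Submodule.reflection_sub (by simp)
  have hcont : Continuous (sphereRot R) :=
    (R.continuous.comp continuous_subtype_val).subtype_mk _
  conv_rhs => rw [← hσinv R]
  rw [integral_map hcont.aemeasurable (by fun_prop)]
  refine integral_congr_ae (ae_of_all _ fun z => ?_)
  change g ⟪_, _⟫ = g ⟪(y : EuclideanSpace ℝ (Fin d)), R z⟫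
  rw [← hR, R.inner_map_map]

lemma Continuous.integrable_of_compactSpace {X F : Type*} [TopologicalSpace X] [CompactSpace X]
    [MeasurableSpace X] [BorelSpace X] [NormedAddCommGroup F] [SecondCountableTopology F]
    {μ : Measure X} [IsFiniteMeasure μ] {f : X → F} (hf : Continuous f) : Integrable f μ :=
  integrableOn_univ.mp (hf.continuousOn.integrableOn_compact' isCompact_univ MeasurableSet.univ)

lemma integrable_tensorPower {d : ℕ} (p : ℕ)
    {σ : Measure (Metric.sphere (0 : EuclideanSpace ℝ (Fin d)) 1)} [IsProbabilityMeasure σ] :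
    Integrable (fun x : Metric.sphere (0 : EuclideanSpace ℝ (Fin d)) 1 =>
      tensorPower p (x : EuclideanSpace ℝ (Fin d))) σ :=
  ((continuous_tensorPower p).comp continuous_subtype_val).integrable_of_compactSpace

/-- Each moment discrepancy is controlled by the energy excess of the kernel
`exp (α (⟪x, y⟫ - 1))`. -/
lemma moment_discrepancy_le {d : ℕ} {α : ℝ} (hα : 0 < α)
    {σ : Measure (Metric.sphere (0 : EuclideanSpace ℝ (Fin d)) 1)} [IsProbabilityMeasure σ]
    (hσinv : ∀ R : EuclideanSpace ℝ (Fin d) ≃ₗᵢ[ℝ] EuclideanSpace ℝ (Fin d),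
      Measure.map (sphereRot R) σ = σ) {c : ℝ}
    (hc : ∀ x : Metric.sphere (0 : EuclideanSpace ℝ (Fin d)) 1,
      ∫ y, Real.exp (α * (⟪(x : EuclideanSpace ℝ (Fin d)), y⟫ - 1)) ∂σ = c)
    {n : ℕ} (hn : n ≠ 0) (u : Fin n → Metric.sphere (0 : EuclideanSpace ℝ (Fin d)) 1) (p : ℕ) :
    Real.exp (-α) * (α ^ p / p.factorial) *
        ‖(n : ℝ)⁻¹ • ∑ i, tensorPower p (u i : EuclideanSpace ℝ (Fin d)) -
          ∫ y : Metric.sphere (0 : EuclideanSpace ℝ (Fin d)) 1, tensorPower p y ∂σ‖ ^ 2 ≤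
      ((n : ℝ) ^ 2)⁻¹ * (∑ j, ∑ i, Real.exp (α * (⟪(u i : EuclideanSpace ℝ (Fin d)), u j⟫ - 1)))
        - c := by
  set x₀ := u ⟨0, Nat.pos_of_ne_zero hn⟩
  set m : ℕ → ℝ := fun p => ∫ y, ⟪(x₀ : EuclideanSpace ℝ (Fin d)), y⟫ ^ p ∂σ with hm
  have hm' : ∀ p (x : Metric.sphere (0 : EuclideanSpace ℝ (Fin d)) 1),
      ∫ y, ⟪(x : EuclideanSpace ℝ (Fin d)), y⟫ ^ p ∂σ = m p := fun p x =>
    integral_zonal_eq hσinv (continuous_pow p) x x₀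
  have hsum : ∀ t : ℝ, HasSum (fun p : ℕ => Real.exp (-α) * (α ^ p / p.factorial) * t ^ p)
      (Real.exp (α * (t - 1))) := by
    intro t
    have h := (NormedSpace.expSeries_div_hasSum_exp (α * t)).mul_left (Real.exp (-α))
    rw [← Real.exp_eq_exp_ℝ, ← Real.exp_add] at h
    convert! h using 1
    · ext p
      rw [mul_pow]
      ring
    · congr 1
      ring
  have hle : ∀ (x y : Metric.sphere (0 : EuclideanSpace ℝ (Fin d)) 1),
      |⟪(x : EuclideanSpace ℝ (Fin d)), y⟫| ≤ 1 := fun x y => by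
    simpa using abs_real_inner_le_norm (x : EuclideanSpace ℝ (Fin d)) y
  have hmsum : HasSum (fun p : ℕ => Real.exp (-α) * (α ^ p / p.factorial) * m p) c := by
    rw [← hc x₀]
    simp only [hm, ← integral_const_mul]
    refine hasSum_integral_of_dominated_convergence
      (fun p _ => Real.exp (-α) * (α ^ p / p.factorial) * 1 ^ p) (fun p => ?_) (fun p => ?_)
      (ae_of_all _ fun _ => (hsum 1).summable) (integrable_const _)
      (ae_of_all _ fun y => hsum _)
    · exact Continuous.aestronglyMeasurable (by fun_prop)
    · refine ae_of_all _ fun y => ?_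
      rw [norm_mul, norm_pow, Real.norm_of_nonneg (by positivity)]
      gcongr
      exact hle _ _
  have hJ : ∀ p, ‖(n : ℝ)⁻¹ • ∑ i, tensorPower p (u i : EuclideanSpace ℝ (Fin d)) -
      ∫ y : Metric.sphere (0 : EuclideanSpace ℝ (Fin d)) 1, tensorPower p y ∂σ‖ ^ 2 =
      ((n : ℝ) ^ 2)⁻¹ * (∑ j, ∑ i, ⟪(u i : EuclideanSpace ℝ (Fin d)), u j⟫ ^ p) - m p := by
    intro p
    rw [norm_sq_mean_sub_integral
      (integrable_tensorPower p) (c := m p) (fun x => by simp only [inner_tensorPower, hm']) hn]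
    simp only [inner_tensorPower]
  have htotal : HasSum (fun p : ℕ => Real.exp (-α) * (α ^ p / p.factorial) *
      ‖(n : ℝ)⁻¹ • ∑ i, tensorPower p (u i : EuclideanSpace ℝ (Fin d)) -
        ∫ y : Metric.sphere (0 : EuclideanSpace ℝ (Fin d)) 1, tensorPower p y ∂σ‖ ^ 2)
      (((n : ℝ) ^ 2)⁻¹ *
        (∑ j, ∑ i, Real.exp (α * (⟪(u i : EuclideanSpace ℝ (Fin d)), u j⟫ - 1))) - c) := by
    have h := ((hasSum_sum (s := Finset.univ) fun j _ => hasSum_sum (s := Finset.univ) fun i _ =>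
      hsum ⟪(u i : EuclideanSpace ℝ (Fin d)), u j⟫).mul_left (((n : ℝ) ^ 2)⁻¹)).sub hmsum
    convert! h using 1
    ext p
    rw [hJ]
    simp only [← Finset.mul_sum]
    ring
  exact le_hasSum htotal p fun q _ => by positivity

/-- A sequence of configurations whose degree-`p` moments all converge to those of `σ` has
averages converging to the integral for every continuous function on the sphere. -/
lemma tendsto_mean_of_tendsto_tensorPower {d : ℕ}
    {σ : Measure (Metric.sphere (0 : EuclideanSpace ℝ (Fin d)) 1)} [IsProbabilityMeasure σ]
    {u : (n : ℕ) → Fin n → Metric.sphere (0 : EuclideanSpace ℝ (Fin d)) 1}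
    (hmom : ∀ p, Tendsto (fun n : ℕ =>
      (n : ℝ)⁻¹ • ∑ i, tensorPower p (u n i : EuclideanSpace ℝ (Fin d))) atTop
      (𝓝 (∫ y : Metric.sphere (0 : EuclideanSpace ℝ (Fin d)) 1, tensorPower p y ∂σ)))
    (f : C(Metric.sphere (0 : EuclideanSpace ℝ (Fin d)) 1, ℝ)) :
    Tendsto (fun n : ℕ => (n : ℝ)⁻¹ * ∑ i, f (u n i)) atTop (𝓝 (∫ x, f x ∂σ)) := by
  set coord : Fin d → C(Metric.sphere (0 : EuclideanSpace ℝ (Fin d)) 1, ℝ) := fun a =>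
    ⟨fun x => (x : EuclideanSpace ℝ (Fin d)) a, by fun_prop⟩
  set A := Algebra.adjoin ℝ (Set.range coord)
  have hint : ∀ g : C(Metric.sphere (0 : EuclideanSpace ℝ (Fin d)) 1, ℝ), Integrable g σ :=
    fun g => g.continuous.integrable_of_compactSpace
  have hA : ∀ g ∈ A, Tendsto (fun n : ℕ => (n : ℝ)⁻¹ * ∑ i, g (u n i)) atTop
      (𝓝 (∫ x, g x ∂σ)) := by
    intro g hg
    rw [← Subalgebra.mem_toSubmodule, Algebra.adjoin_eq_span] at hg
    induction hg using Submodule.span_induction with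
    | mem g hg =>
      obtain ⟨l, hl, rfl⟩ := Submonoid.exists_list_of_mem_closure hg
      choose a ha using hl
      have hprod : ∀ x : Metric.sphere (0 : EuclideanSpace ℝ (Fin d)) 1, l.prod x =
          tensorPower l.length (x : EuclideanSpace ℝ (Fin d))
            fun q => a l[q] (List.getElem_mem _) := by
        intro x
        have h1 : l.prod = ∏ q : Fin l.length, l[q] := by simp
        rw [h1, ContinuousMap.coe_prod, Finset.prod_apply]
        simp only [tensorPower]
        refine Finset.prod_congr rfl fun q _ => ?_
        conv_lhs => rw [← ha l[q] (List.getElem_mem _)]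
        rfl
      have h := ((EuclideanSpace.proj (𝕜 := ℝ)
        fun q : Fin l.length => a l[q] (List.getElem_mem _)).continuous.tendsto _).comp
          (hmom l.length)
      rw [← ContinuousLinearMap.integral_comp_comm _ (integrable_tensorPower _)] at h
      simpa [Function.comp_def, hprod] using h
    | zero => simp
    | add g h _ _ hg hh =>
      simp only [ContinuousMap.add_apply, Finset.sum_add_distrib, mul_add]
      rw [integral_add (hint g) (hint h)]
      exact hg.add hh
    | smul r g _ hg =>
      simp only [ContinuousMap.smul_apply, smul_eq_mul, ← Finset.mul_sum, integral_const_mul]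
      simpa only [mul_left_comm] using hg.const_mul r
  have hsep : A.SeparatesPoints := by
    intro x y hxy
    obtain ⟨a, ha⟩ : ∃ a, (x : EuclideanSpace ℝ (Fin d)) a ≠ (y : EuclideanSpace ℝ (Fin d)) a := by
      by_contra! h
      exact hxy (Subtype.ext (PiLp.ext h))
    exact ⟨coord a, ⟨coord a, Algebra.subset_adjoin ⟨a, rfl⟩, rfl⟩, ha⟩
  rw [Metric.tendsto_atTop]
  intro ε hε
  have hf : f ∈ closure (A : Set C(Metric.sphere (0 : EuclideanSpace ℝ (Fin d)) 1, ℝ)) := by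
    rw [← Subalgebra.topologicalClosure_coe,
      ContinuousMap.subalgebra_topologicalClosure_eq_top_of_separatesPoints A hsep]
    trivial
  obtain ⟨g, hgA, hfg⟩ := Metric.mem_closure_iff.mp hf (ε / 3) (by positivity)
  obtain ⟨N, hN⟩ := Metric.tendsto_atTop.mp (hA g hgA) (ε / 3) (by positivity)
  have hpt : ∀ x, |f x - g x| ≤ ε / 3 := fun x =>
    (ContinuousMap.dist_apply_le_dist x).trans hfg.le
  refine ⟨N, fun n hn => ?_⟩
  have h1 := hN n hn
  rw [Real.dist_eq] at h1 ⊢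
  have h2 : |(n : ℝ)⁻¹ * ∑ i, f (u n i) - (n : ℝ)⁻¹ * ∑ i, g (u n i)| ≤ ε / 3 := by
    rw [← mul_sub, ← Finset.sum_sub_distrib, abs_mul, abs_of_nonneg (by positivity)]
    calc (n : ℝ)⁻¹ * |∑ i, (f (u n i) - g (u n i))| ≤ (n : ℝ)⁻¹ * ∑ _i : Fin n, ε / 3 := by
          gcongr
          exact (Finset.abs_sum_le_sum_abs _ _).trans (Finset.sum_le_sum fun i _ => hpt _)
      _ = ((n : ℝ)⁻¹ * n) * (ε / 3) := by simp [mul_assoc]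
      _ ≤ 1 * (ε / 3) := by
          gcongr
          exact inv_mul_le_one
      _ = ε / 3 := one_mul _
  have h3 : |∫ x, f x ∂σ - ∫ x, g x ∂σ| ≤ ε / 3 := by
    rw [← integral_sub (hint f) (hint g)]
    simpa using norm_integral_le_of_norm_le_const (μ := σ) (f := fun x => f x - g x)
      (ae_of_all _ hpt)
  rw [abs_lt] at h1 ⊢
  rw [abs_le] at h2 h3
  constructor <;> linarith [h1.1, h1.2, h2.1, h2.2, h3.1, h3.2]

/-- Let `σ` be the uniform (rotation-invariant) probability measure on the
unit sphere `S ⊂ ℝ^d`, `d ≥ 2`, and `α > 0`. If for each `n ≥ 1` the tuple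
`u n : Fin n → S` is a global minimizer of
`L_α(w) = ∑ i, log (1 + ∑_{j ≠ i} exp (α (⟪w j, w i⟫ - 1)))` over `Sⁿ`, then the empirical
measures `μ_n = (1/n) ∑ i, δ_{u n i}` converge weakly to `σ`. -/
theorem empirical_minimizers_tendsto_uniform (d : ℕ) (hd : 2 ≤ d) (α : ℝ) (hα : 0 < α)
    (σ : Measure (Metric.sphere (0 : EuclideanSpace ℝ (Fin d)) 1))
    (hσprob : IsProbabilityMeasure σ)
    (hσinv : ∀ R : EuclideanSpace ℝ (Fin d) ≃ₗᵢ[ℝ] EuclideanSpace ℝ (Fin d),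
      Measure.map (sphereRot R) σ = σ)
    (u : (n : ℕ) → Fin n → Metric.sphere (0 : EuclideanSpace ℝ (Fin d)) 1)
    (hmin : ∀ n : ℕ, 1 ≤ n →
      ∀ w : Fin n → Metric.sphere (0 : EuclideanSpace ℝ (Fin d)) 1,
        (∑ i, Real.log (1 + ∑ j ∈ Finset.univ.erase i,
          Real.exp (α * (⟪(u n j : EuclideanSpace ℝ (Fin d)),
            (u n i : EuclideanSpace ℝ (Fin d))⟫ - 1)))) ≤
        ∑ i, Real.log (1 + ∑ j ∈ Finset.univ.erase i,
          Real.exp (α * (⟪(w j : EuclideanSpace ℝ (Fin d)),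
            (w i : EuclideanSpace ℝ (Fin d))⟫ - 1)))) :
    ∀ f : BoundedContinuousFunction (Metric.sphere (0 : EuclideanSpace ℝ (Fin d)) 1) ℝ,
      Tendsto (fun n : ℕ =>
          ∫ x, f x ∂((n : ℝ≥0∞)⁻¹ • ∑ i : Fin n, Measure.dirac (u n i)))
        atTop (𝓝 (∫ x, f x ∂σ)) := by
  intro f
  have hcont : ∀ y : Metric.sphere (0 : EuclideanSpace ℝ (Fin d)) 1,
      Continuous fun x : Metric.sphere (0 : EuclideanSpace ℝ (Fin d)) 1 =>
        Real.exp (α * (⟪(y : EuclideanSpace ℝ (Fin d)), x⟫ - 1)) := fun y => by fun_prop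
  have hinner : ∀ (x y : Metric.sphere (0 : EuclideanSpace ℝ (Fin d)) 1),
      |⟪(x : EuclideanSpace ℝ (Fin d)), y⟫| ≤ 1 := fun x y => by
    simpa using abs_real_inner_le_norm (x : EuclideanSpace ℝ (Fin d)) y
  set x₀ := u 1 0
  set c := ∫ x, Real.exp (α * (⟪(x₀ : EuclideanSpace ℝ (Fin d)), x⟫ - 1)) ∂σ with hc
  have hpot : ∀ y : Metric.sphere (0 : EuclideanSpace ℝ (Fin d)) 1,
      ∫ x, Real.exp (α * (⟪(y : EuclideanSpace ℝ (Fin d)), x⟫ - 1)) ∂σ = c := fun y =>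
    integral_zonal_eq hσinv (g := fun t => Real.exp (α * (t - 1))) (by fun_prop) y x₀
  have hcpos : 0 < c := integral_exp_pos (hcont x₀).integrable_of_compactSpace
  have hexcess : ∀ n : ℕ, 1 ≤ n → ((n : ℝ) ^ 2)⁻¹ *
      (∑ j, ∑ i, Real.exp (α * (⟪(u n i : EuclideanSpace ℝ (Fin d)), u n j⟫ - 1))) - c ≤
        3 / Real.exp (-2 * α) * (n : ℝ)⁻¹ := by
    intro n hn
    have h := quadratic_energy_le_of_minimizer (σ := σ)
      (k := fun x y : Metric.sphere (0 : EuclideanSpace ℝ (Fin d)) 1 =>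
        Real.exp (α * (⟪(x : EuclideanSpace ℝ (Fin d)), y⟫ - 1)))
      (Real.exp_pos (-2 * α)) hcpos
      (fun x y => by rw [real_inner_comm]) (fun x => by simp)
      (fun x y => Real.exp_le_exp.mpr (by nlinarith [abs_le.mp (hinner x y)]))
      (fun x y => Real.exp_le_one_iff.mpr (by nlinarith [abs_le.mp (hinner x y)]))
      (fun y => (hcont y).integrable_of_compactSpace) hpot hn (hmin n hn)
    have hn' : (0 : ℝ) < n := by exact_mod_cast hn
    have h2 := mul_le_mul_of_nonneg_left h (inv_nonneg.mpr (sq_nonneg (n : ℝ)))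
    have h3 : ((n : ℝ) ^ 2)⁻¹ * (n ^ 2 * c + 3 / Real.exp (-2 * α) * n) =
        c + 3 / Real.exp (-2 * α) * (n : ℝ)⁻¹ := by
      field_simp
    linarith
  have hmom : ∀ p, Tendsto (fun n : ℕ =>
      (n : ℝ)⁻¹ • ∑ i, tensorPower p (u n i : EuclideanSpace ℝ (Fin d))) atTop
      (𝓝 (∫ y : Metric.sphere (0 : EuclideanSpace ℝ (Fin d)) 1, tensorPower p y ∂σ)) := by
    intro p
    have hw : 0 < Real.exp (-α) * (α ^ p / p.factorial) := by positivity
    rw [tendsto_iff_norm_sub_tendsto_zero]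
    have hsq : Tendsto (fun n : ℕ =>
        ‖(n : ℝ)⁻¹ • ∑ i, tensorPower p (u n i : EuclideanSpace ℝ (Fin d)) -
          ∫ y : Metric.sphere (0 : EuclideanSpace ℝ (Fin d)) 1, tensorPower p y ∂σ‖ ^ 2)
        atTop (𝓝 0) := by
      have hlim : Tendsto (fun n : ℕ => 3 / Real.exp (-2 * α) * (n : ℝ)⁻¹ /
          (Real.exp (-α) * (α ^ p / p.factorial))) atTop (𝓝 0) := by
        simpa using (tendsto_inv_atTop_nhds_zero_nat (𝕜 := ℝ)).const_mul
          (3 / Real.exp (-2 * α)) |>.div_const (Real.exp (-α) * (α ^ p / p.factorial))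
      refine squeeze_zero' (Eventually.of_forall fun n => by positivity) ?_ hlim
      filter_upwards [eventually_ge_atTop 1] with n hn
      rw [le_div_iff₀' hw]
      exact (moment_discrepancy_le hα hσinv hpot (by lia) (u n) p).trans (hexcess n hn)
    simpa [Real.sqrt_sq_eq_abs] using hsq.sqrt
  refine (tendsto_mean_of_tendsto_tensorPower hmom f.toContinuousMap).congr fun n => ?_
  rw [integral_smul_measure, integral_finsetSum_measure fun i _ => integrable_dirac (by simp)]
  simp
end
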